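/- Let m ≥ 2. For every deterministic classical strategy for the (2,m) random exclusion code with one bit of communication (encoding E : (Fin m)×(Fin m) → Fin 2 and decoding b : Fin 2 × Fin 2 → Fin m), the number of pairs (a,i) with b(E(a),i) = a_i (i.e. the strategy fails to exclude) is at least 2. -/

import Mathlib

/-!
Write `pₑ = b (e, 0)` and `qₑ = b (e, 1)` for the guesses made on message `e`. The word `(p₀, q₁)`
fails whichever message encodes it: message `0` fails on the first letter, message `1` on the
second. Symmetrically, `(p₁, q₀)` always fails. If these two words differ, they give two failing
pairs; if they coincide, the guesses do not depend on the message, and the word `(p₀, q₀)` fails on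
both letters.
-/

/-- Number of pairs `(a, i)` on which the deterministic classical strategy `(E, b)` for
the `(2,m)` random exclusion code fails to exclude, i.e. `b (E a) i = aᵢ`. -/
def recFailCount (m : ℕ) (E : Fin m × Fin m → Fin 2) (b : Fin 2 × Fin 2 → Fin m) : ℕ :=
  (Finset.univ.filter fun x : (Fin m × Fin m) × Fin 2 =>
    b (E x.1, x.2) = (if x.2 = 0 then x.1.1 else x.1.2)).card

/-- Whatever message `E` assigns to it, a word whose first letter is the guess on message `e` and
whose second letter is the guess on message `f ≠ e` fails on some question. -/
lemma exists_fail {m : ℕ} (E : Fin m × Fin m → Fin 2) (b : Fin 2 × Fin 2 → Fin m)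
    (e f : Fin 2) (hef : e ≠ f) :
    ∃ i : Fin 2, b (E (b (e, 0), b (f, 1)), i) = if i = 0 then b (e, 0) else b (f, 1) := by
  have h : E (b (e, 0), b (f, 1)) = e ∨ E (b (e, 0), b (f, 1)) = f := by omega
  rcases h with h | h
  · exact ⟨0, by rw [h]; simp⟩
  · exact ⟨1, by rw [h]; simp⟩

theorem stmt1 (m : ℕ) (hm : 2 ≤ m)
    (E : Fin m × Fin m → Fin 2) (b : Fin 2 × Fin 2 → Fin m) :
    2 ≤ recFailCount m E b := by
  refine Finset.one_lt_card.mpr ?_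
  by_cases hw : (b (0, 0), b (1, 1)) = (b (1, 0), b (0, 1))
  · obtain ⟨hp, hq⟩ := Prod.mk.inj hw
    have hb : ∀ e : Fin 2, b (e, 0) = b (0, 0) ∧ b (e, 1) = b (0, 1) := by
      intro e
      fin_cases e
      · exact ⟨rfl, rfl⟩
      · exact ⟨hp.symm, hq⟩
    refine ⟨((b (0, 0), b (0, 1)), 0), ?_, ((b (0, 0), b (0, 1)), 1), ?_, by simp⟩
    · simp [(hb _).1]
    · simp [(hb _).2]
  · obtain ⟨i, hi⟩ := exists_fail E b 0 1 (by decide)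
    obtain ⟨j, hj⟩ := exists_fail E b 1 0 (by decide)
    exact ⟨((b (0, 0), b (1, 1)), i), by simpa using hi, ((b (1, 0), b (0, 1)), j),
      by simpa using hj, fun h => hw (congrArg Prod.fst h)⟩
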